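/- For every integer k ≥ 11 with k ≡ 3 (mod 4), there exists a k-ARCS(6k+1), i.e. an almost resolvable k-cycle system of order 6k+1. -/

import Mathlib

open SimpleGraph

/-- `F` is a `C_k`-factor of `H`: a spanning subgraph of `H` that is 2-regular
and each of whose connected components has exactly `k` vertices. -/
def IsCycleFactor {V : Type*} (H F : SimpleGraph V) (k : ℕ) : Prop :=
  F ≤ H ∧ (∀ v, (F.neighborSet v).ncard = 2) ∧
    ∀ v : V, {w | F.Reachable v w}.ncard = k

/-- The family of graphs `F` partitions the edge set of `H`. -/
def IsDecomp {V ι : Type*} (H : SimpleGraph V) (F : ι → SimpleGraph V) : Prop :=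
  (Pairwise fun i j => Disjoint (F i).edgeSet (F j).edgeSet) ∧
  ∀ e, e ∈ H.edgeSet ↔ ∃ i, e ∈ (F i).edgeSet

/-- `HW H m n α β`: the edge set of `H` can be partitioned into
`α` `C_m`-factors and `β` `C_n`-factors. -/
def HW {V : Type*} (H : SimpleGraph V) (m n α β : ℕ) : Prop :=
  ∃ F : Fin α ⊕ Fin β → SimpleGraph V,
    (∀ i, IsCycleFactor H (F (Sum.inl i)) m) ∧
    (∀ j, IsCycleFactor H (F (Sum.inr j)) n) ∧
    IsDecomp H F

/-- `(α, β) ∈ HWP(v; m, n)` for odd `v`: `K_v` has a 2-factorization into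
`α` `C_m`-factors and `β` `C_n`-factors. -/
def HWPodd (v m n α β : ℕ) : Prop := HW (⊤ : SimpleGraph (Fin v)) m n α β

/-- `F ≤ H` is a vertex-disjoint union of `c` cycles of length `k`:
2-regular on its support, every component has `k` vertices, and the support
has `k * c` vertices. -/
def IsCycleClass {V : Type*} (H F : SimpleGraph V) (k c : ℕ) : Prop :=
  F ≤ H ∧ (∀ v ∈ F.support, (F.neighborSet v).ncard = 2) ∧
  (∀ v ∈ F.support, {w | F.Reachable v w}.ncard = k) ∧
  F.support.ncard = k * c

/-- An almost resolvable `k`-cycle system of order `v`: a partition of the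
edges of `K_v` into `(v-1)/2` almost parallel classes (each a vertex-disjoint
union of `(v-1)/k` `k`-cycles) together with one half-parallel class
(a vertex-disjoint union of `(v-1)/(2k)` `k`-cycles). -/
def IsARCS (k v : ℕ) : Prop :=
  ∃ F : Fin ((v - 1) / 2) ⊕ Unit → SimpleGraph (Fin v),
    (∀ i, IsCycleClass ⊤ (F (Sum.inl i)) k ((v - 1) / k)) ∧
    (∀ j, IsCycleClass ⊤ (F (Sum.inr j)) k ((v - 1) / (2 * k))) ∧
    IsDecomp (⊤ : SimpleGraph (Fin v)) F

/-- The lexicographic product `C_m[n]` of the cycle `C_m` with the empty graph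
on `n` vertices, on vertex set `ZMod m × ZMod n`. -/
def lexCycle (m n : ℕ) : SimpleGraph (ZMod m × ZMod n) :=
  SimpleGraph.fromRel (fun a b => a.1 - b.1 = 1)

/-- The Cayley graph of an additive group with connection set `S`. -/
def cayley {Γ : Type*} [AddGroup Γ] (S : Set Γ) : SimpleGraph Γ :=
  SimpleGraph.fromRel (fun a b => a - b ∈ S)

/-!
Write `k = 4 m + 7` and `n = 3 k`, and take as points two copies of `ℤ/n` together with `∞`.
Six explicit `k`-cycles cover all points but one, and their edges realise every difference between
and within the two copies, except `±3` within the lower copy; `∞` is joined to both copies. The `n`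
translates of this base class are the almost parallel classes. The three cosets of `⟨3⟩` in the
lower copy, traversed by steps of `3`, form the half-parallel class and supply the missing
differences. The number of edges available equals the number of pairs of points, so it suffices
that every pair is covered: nothing is then covered twice.

Most of each base cycle consists of zigzags `u, v, u + 1, v - 1, …`, whose differences fill an
interval, so covering all differences reduces to linear arithmetic in `m`.
-/

section CycleUnion

variable {A V W : Type*} {k : ℕ} {f : A → ZMod k → V} {u v : V}

/-- The vertices `u` and `v` are consecutive on one of the closed walks
`f a 0, f a 1, …, f a (k - 1), f a 0`. Such a family `f` encodes a set of `k`-cycles. -/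
def CycleAdj (f : A → ZMod k → V) (u v : V) : Prop :=
  ∃ a j, f a j = u ∧ f a (j + 1) = v ∨ f a j = v ∧ f a (j + 1) = u

lemma CycleAdj.symm (h : CycleAdj f u v) : CycleAdj f v u :=
  let ⟨a, j, h⟩ := h
  ⟨a, j, h.symm⟩

lemma cycleAdj_apply_add_one (f : A → ZMod k → V) (a : A) (j : ZMod k) :
    CycleAdj f (f a j) (f a (j + 1)) :=
  ⟨a, j, .inl ⟨rfl, rfl⟩⟩

lemma CycleAdj.comp (φ : V → W) (h : CycleAdj f u v) :
    CycleAdj (fun a j => φ (f a j)) (φ u) (φ v) := by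
  obtain ⟨a, j, ⟨rfl, rfl⟩ | ⟨rfl, rfl⟩⟩ := h
  · exact cycleAdj_apply_add_one _ a j
  · exact (cycleAdj_apply_add_one _ a j).symm

/-- The graph formed by the edges of all closed walks `f a`. -/
def cycleUnion (f : A → ZMod k → V) : SimpleGraph V :=
  SimpleGraph.fromRel (CycleAdj f)

lemma cycleUnion_adj : (cycleUnion f).Adj u v ↔ u ≠ v ∧ CycleAdj f u v := by
  rw [cycleUnion, SimpleGraph.fromRel_adj]
  exact and_congr_right fun _ => or_iff_left_of_imp CycleAdj.symm

lemma cycleUnion_adj_apply_iff (hf : Function.Injective2 f) (hk : 1 < k) (a : A) (j : ZMod k) :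
    (cycleUnion f).Adj (f a j) v ↔ v = f a (j + 1) ∨ v = f a (j - 1) := by
  have : Fact (1 < k) := ⟨hk⟩
  rw [cycleUnion_adj]
  constructor
  · rintro ⟨-, a', j', ⟨hu, rfl⟩ | ⟨rfl, hu⟩⟩ <;> obtain ⟨rfl, rfl⟩ := hf hu
    · exact .inl rfl
    · exact .inr (by rw [add_sub_cancel_right])
  · rintro (rfl | rfl)
    · exact ⟨fun h => by simpa using (hf h).2, cycleAdj_apply_add_one f a j⟩
    · refine ⟨fun h => by simpa [eq_sub_iff_add_eq] using (hf h).2, ?_⟩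
      simpa using (cycleAdj_apply_add_one f a (j - 1)).symm

lemma support_cycleUnion (hf : Function.Injective2 f) (hk : 1 < k) :
    (cycleUnion f).support = Set.range f.uncurry := by
  ext v
  rw [SimpleGraph.mem_support]
  constructor
  · rintro ⟨w, hw⟩
    obtain ⟨-, a, j, ⟨h, -⟩ | ⟨-, h⟩⟩ := cycleUnion_adj.1 hw
    · exact ⟨(a, j), h⟩
    · exact ⟨(a, j + 1), h⟩
  · rintro ⟨⟨a, j⟩, rfl⟩
    exact ⟨f a (j + 1), (cycleUnion_adj_apply_iff hf hk a j).2 (.inl rfl)⟩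

lemma ncard_neighborSet_cycleUnion (hf : Function.Injective2 f) (hk : 3 ≤ k) (a : A)
    (j : ZMod k) : ((cycleUnion f).neighborSet (f a j)).ncard = 2 := by
  have hpair : (cycleUnion f).neighborSet (f a j) = {f a (j + 1), f a (j - 1)} := by
    ext w
    exact cycleUnion_adj_apply_iff hf (by lia) a j
  have htwo : ((2 : ℕ) : ZMod k) ≠ 0 := by
    rw [Ne, ZMod.natCast_eq_zero_iff]
    exact fun h => absurd (Nat.le_of_dvd two_pos h) (by lia)
  rw [hpair, Set.ncard_pair]
  intro h
  apply htwo
  push_cast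
  linear_combination (hf h).2

lemma reachable_cycleUnion_iff (hf : Function.Injective2 f) (hk : 1 < k) (a : A) (j : ZMod k) :
    (cycleUnion f).Reachable (f a j) v ↔ v ∈ Set.range (f a) := by
  have : NeZero k := ⟨by lia⟩
  constructor
  · rw [SimpleGraph.reachable_iff_reflTransGen]
    intro h
    induction h with
    | refl => exact ⟨j, rfl⟩
    | tail _ hadj ih =>
      obtain ⟨i, rfl⟩ := ih
      obtain rfl | rfl := (cycleUnion_adj_apply_iff hf hk a i).1 hadj
      exacts [⟨_, rfl⟩, ⟨_, rfl⟩]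
  · have hadd (s : ℕ) : (cycleUnion f).Reachable (f a j) (f a (j + s)) := by
      induction s with
      | zero => simp
      | succ s ih =>
        rw [Nat.cast_succ, ← add_assoc]
        exact ih.trans ((cycleUnion_adj_apply_iff hf hk a _).2 (.inl rfl)).reachable
    rintro ⟨i, rfl⟩
    simpa using hadd (i - j).val

theorem isCycleClass_cycleUnion [Fintype A] (hf : Function.Injective2 f) (hk : 3 ≤ k) :
    IsCycleClass ⊤ (cycleUnion f) k (Fintype.card A) := by
  have hsupp := support_cycleUnion hf (show 1 < k by lia)
  refine ⟨le_top, ?_, ?_, ?_⟩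
  · rw [hsupp]
    rintro _ ⟨⟨a, j⟩, rfl⟩
    exact ncard_neighborSet_cycleUnion hf hk a j
  · rw [hsupp]
    rintro _ ⟨⟨a, j⟩, rfl⟩
    have hcomp : {w | (cycleUnion f).Reachable (f a j) w} = Set.range (f a) :=
      Set.ext fun w => reachable_cycleUnion_iff hf (by lia) a j
    exact (congrArg Set.ncard hcomp).trans
      ((Nat.card_range_of_injective (hf.right a)).trans (Nat.card_zmod k))
  · rw [hsupp]
    refine (Nat.card_range_of_injective hf.uncurry).trans ?_
    rw [Nat.card_prod, Nat.card_zmod, Nat.card_eq_fintype_card, mul_comm]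

end CycleUnion

theorem isDecomp_of_sum_ncard_edgeSet_le {V ι : Type*} [Finite V] [Fintype ι]
    {H : SimpleGraph V} {F : ι → SimpleGraph V} (hle : ∀ i, F i ≤ H)
    (hcover : ∀ u v, H.Adj u v → ∃ i, (F i).Adj u v)
    (hcard : ∑ i, (F i).edgeSet.ncard ≤ H.edgeSet.ncard) : IsDecomp H F := by
  let toEdge (x : Σ i, (F i).edgeSet) : H.edgeSet :=
    ⟨x.2, SimpleGraph.edgeSet_mono (hle x.1) x.2.2⟩
  have hsurj : Function.Surjective toEdge := by
    rintro ⟨⟨u, v⟩, huv⟩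
    obtain ⟨i, hi⟩ := hcover u v huv
    exact ⟨⟨i, s(u, v), hi⟩, rfl⟩
  have hinj : Function.Injective toEdge :=
    (hsurj.bijective_of_nat_card_le (by simpa [Nat.card_sigma] using hcard)).injective
  refine ⟨fun i j hij => Set.disjoint_left.2 fun e hi hj => hij ?_, fun e => ⟨fun he => ?_, ?_⟩⟩
  · exact congrArg Sigma.fst (@hinj ⟨i, e, hi⟩ ⟨j, e, hj⟩ rfl)
  · obtain ⟨⟨i, e', hi⟩, h⟩ := hsurj ⟨e, he⟩
    obtain rfl : e' = e := congrArg Subtype.val h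
    exact ⟨i, hi⟩
  · exact fun ⟨i, hi⟩ => SimpleGraph.edgeSet_mono (hle i) hi

lemma IsCycleClass.ncard_edgeSet {V : Type*} [Finite V] {H F : SimpleGraph V} {k c : ℕ}
    (h : IsCycleClass H F k c) : F.edgeSet.ncard = k * c := by
  classical
  have := Fintype.ofFinite V
  obtain ⟨-, hneighbors, -, hsupport⟩ := h
  have hdegree (v : V) : F.degree v = if v ∈ F.support then 2 else 0 := by
    split_ifs with hv
    · rw [← hneighbors v hv, Set.ncard_eq_toFinset_card', Set.toFinset_card,
        F.card_neighborSet_eq_degree]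
    · exact (F.degree_eq_zero_iff_notMem_support v).2 hv
  have htwice : 2 * F.edgeSet.ncard = 2 * F.support.ncard :=
    calc 2 * F.edgeSet.ncard
        = 2 * F.edgeFinset.card := by rw [← SimpleGraph.coe_edgeFinset, Set.ncard_coe_finset]
      _ = ∑ v, F.degree v := F.sum_degrees_eq_twice_card_edges.symm
      _ = ∑ v, if v ∈ F.support then 2 else 0 := Finset.sum_congr rfl fun v _ => hdegree v
      _ = 2 * F.support.ncard := by
          rw [← Finset.sum_filter, Finset.sum_const, smul_eq_mul, mul_comm,
            Set.ncard_eq_toFinset_card', Set.filter_mem_univ_eq_toFinset]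
  lia

lemma ncard_edgeSet_top_fin (v : ℕ) : (⊤ : SimpleGraph (Fin v)).edgeSet.ncard = v.choose 2 := by
  rw [← SimpleGraph.coe_edgeFinset, Set.ncard_coe_finset,
    SimpleGraph.card_edgeFinset_top_eq_card_choose_two, Fintype.card_fin]

theorem isARCS_of_forall_exists_adj {k t : ℕ} (hk : 0 < k)
    {F : Fin (k * t) ⊕ Unit → SimpleGraph (Fin (2 * k * t + 1))}
    (halmost : ∀ i, IsCycleClass ⊤ (F (.inl i)) k (2 * t))
    (hhalf : ∀ j, IsCycleClass ⊤ (F (.inr j)) k t)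
    (hcover : ∀ u v, u ≠ v → ∃ i, (F i).Adj u v) : IsARCS k (2 * k * t + 1) := by
  have hclasses : (2 * k * t + 1 - 1) / 2 = k * t := by
    rw [Nat.add_sub_cancel, mul_assoc, Nat.mul_div_cancel_left _ two_pos]
  have hcycles : (2 * k * t + 1 - 1) / k = 2 * t := by
    rw [Nat.add_sub_cancel, mul_right_comm, Nat.mul_div_cancel _ hk]
  have hhalfcycles : (2 * k * t + 1 - 1) / (2 * k) = t := by
    rw [Nat.add_sub_cancel, Nat.mul_div_cancel_left _ (by lia)]
  rw [IsARCS, hclasses, hcycles, hhalfcycles]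
  refine ⟨F, halmost, hhalf, isDecomp_of_sum_ncard_edgeSet_le (fun _ => le_top) hcover ?_⟩
  have hedges : (2 * k * t + 1).choose 2 = k * t * (k * (2 * t)) + k * t := by
    rw [Nat.choose_two_right, Nat.add_sub_cancel]
    exact Nat.div_eq_of_eq_mul_left two_pos (by ring)
  simp only [Fintype.sum_sum_type, (halmost _).ncard_edgeSet, (hhalf _).ncard_edgeSet,
    ncard_edgeSet_top_fin, hedges, Finset.sum_const, Finset.card_univ, Fintype.card_fin,
    Fintype.card_unit, smul_eq_mul, one_mul, le_refl]

theorem isARCS_of_forall_cycleAdj {V I A B : Type*} [Fintype V] [Fintype I] [Fintype A]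
    [Fintype B] {k t : ℕ} (hk : 3 ≤ k) (hV : Fintype.card V = 2 * k * t + 1)
    (hI : Fintype.card I = k * t) (hA : Fintype.card A = 2 * t) (hB : Fintype.card B = t)
    {F : I → A → ZMod k → V} {H : B → ZMod k → V}
    (hF : ∀ i, Function.Injective2 (F i)) (hH : Function.Injective2 H)
    (hcover : ∀ u v, u ≠ v → (∃ i, CycleAdj (F i) u v) ∨ CycleAdj H u v) :
    IsARCS k (2 * k * t + 1) := by
  let e : V ≃ Fin (2 * k * t + 1) := Fintype.equivFinOfCardEq hV
  let eI : I ≃ Fin (k * t) := Fintype.equivFinOfCardEq hI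
  let C : Fin (k * t) ⊕ Unit → SimpleGraph (Fin (2 * k * t + 1)) :=
    Sum.elim (fun i => cycleUnion fun a j => e (F (eI.symm i) a j))
      fun _ => cycleUnion fun b j => e (H b j)
  refine isARCS_of_forall_exists_adj (F := C) (by lia) (fun i => ?_) (fun _ => ?_)
    fun u v huv => ?_
  · have h := isCycleClass_cycleUnion (f := fun a j => e (F (eI.symm i) a j))
      (fun _ _ _ _ h => hF _ (e.injective h)) hk
    rwa [hA] at h
  · have h := isCycleClass_cycleUnion (f := fun b j => e (H b j))
      (fun _ _ _ _ h => hH (e.injective h)) hk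
    rwa [hB] at h
  · obtain ⟨i, h⟩ | h := hcover (e.symm u) (e.symm v) (e.symm.injective.ne huv)
    · exact ⟨.inl (eI i), cycleUnion_adj.2 ⟨huv, by simpa using h.comp e⟩⟩
    · exact ⟨.inr (), cycleUnion_adj.2 ⟨huv, by simpa using h.comp e⟩⟩

section Starter

variable {A G : Type*} [AddCommGroup G] {k t : ℕ}

/-- The set `G × {0, 1} ∪ {∞}`: `some (false, x)` is `x` on the lower level, `some (true, x)` is
`x` on the upper level, and `none` is `∞`. -/
abbrev Point (G : Type*) : Type _ := Option (Bool × G)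

/-- Some pair of points related by `R`, the first on level `b` and the second on level `c`,
has difference `d`. -/
def HasDifference (R : Point G → Point G → Prop) (b c : Bool) (d : G) : Prop :=
  ∃ y, R (some (b, y)) (some (c, y + d))

/-- Translation by `x` on both levels, fixing `∞`. -/
def Point.shift (x : G) : Point G → Point G :=
  Option.map (Prod.map id (· + x))

lemma Point.shift_injective (x : G) : Function.Injective (Point.shift x) :=
  Option.map_injective (Function.injective_id.prodMap (add_left_injective x))

lemma HasDifference.exists_cycleAdj_shift {f : A → ZMod k → Point G} {b c : Bool}
    {y z : G} (h : HasDifference (CycleAdj f) b c (z - y)) :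
    ∃ x, CycleAdj (fun a j => Point.shift x (f a j)) (some (b, y)) (some (c, z)) := by
  obtain ⟨w, h⟩ := h
  refine ⟨y - w, ?_⟩
  have hz : w + (z - y) + (y - w) = z := by abel
  simpa [Point.shift, hz] using h.comp (Point.shift (y - w))

/-- A base class of cycles whose translates, together with the cycles obtained by repeatedly
adding `h` on the lower level, join any two points. When the number of cycles is right,
`IsStarter.injective2` deduces from `covers` that the points of the base class are distinct. -/
structure IsStarter (f : A → ZMod k → Point G) (h : G) : Prop where
  covers : ∃ p, ∀ w ≠ p, ∃ a j, f a j = w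
  infinity : ∀ b, ∃ y, CycleAdj f none (some (b, y))
  lower : ∀ d ≠ 0, d ≠ h → d ≠ -h → HasDifference (CycleAdj f) false false d
  upper : ∀ d ≠ 0, HasDifference (CycleAdj f) true true d
  mixed : ∀ d, HasDifference (CycleAdj f) false true d

/-- The closed walks `x, x + φ 1, x + 2 φ 1, …` on the lower level, one for each coset of the
range of `φ`. -/
noncomputable def cosetCycle (φ : ZMod k →+ G) (q : G ⧸ φ.range) (j : ZMod k) :
    Point G :=
  some (false, q.out + φ j)

lemma cosetCycle_injective2 {φ : ZMod k →+ G} (hφ : Function.Injective φ) :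
    Function.Injective2 (cosetCycle φ) := by
  intro q q' i j h
  have hsum : q.out + φ i = q'.out + φ j := congrArg Prod.snd (Option.some_injective _ h)
  obtain rfl : q = q' := by
    rw [← q.out_eq', ← q'.out_eq']
    refine QuotientAddGroup.eq.2 ⟨i - j, ?_⟩
    rw [map_sub, sub_eq_iff_eq_add, neg_add_eq_sub, sub_add_eq_add_sub, ← hsum, add_sub_cancel_left]
  exact ⟨rfl, hφ (add_left_cancel hsum)⟩

lemma cycleAdj_cosetCycle (φ : ZMod k →+ G) (y : G) :
    CycleAdj (cosetCycle φ) (some (false, y)) (some (false, y + φ 1)) := by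
  obtain ⟨j, hj⟩ : -(y : G ⧸ φ.range).out + y ∈ φ.range :=
    QuotientAddGroup.eq.1 (QuotientAddGroup.out_eq' _)
  have h := cycleAdj_apply_add_one (cosetCycle φ) (y : G ⧸ φ.range) j
  simp only [cosetCycle, map_add, hj, ← add_assoc, add_neg_cancel, zero_add] at h
  exact h

lemma card_quotient_range [Finite G] [NeZero k] {φ : ZMod k →+ G} (hφ : Function.Injective φ)
    (hG : Nat.card G = k * t) : Nat.card (G ⧸ φ.range) = t := by
  have hrange : Nat.card φ.range = k :=
    (Nat.card_range_of_injective hφ).trans (Nat.card_zmod k)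
  have h := AddSubgroup.card_eq_card_quotient_mul_card_addSubgroup φ.range
  rw [hG, hrange, mul_comm] at h
  exact (Nat.eq_of_mul_eq_mul_right (NeZero.pos k) h).symm

namespace IsStarter

variable {f : A → ZMod k → Point G}

lemma injective2 [Fintype A] [Finite G] [NeZero k] {h : G} (hf : IsStarter f h)
    (hA : Fintype.card A = 2 * t) (hG : Nat.card G = k * t) : Function.Injective2 f := by
  obtain ⟨p, hp⟩ := hf.covers
  let withMissing : Option (A × ZMod k) → Point G := fun o => o.elim p f.uncurry
  have hsurj : Function.Surjective withMissing := by
    intro w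
    by_cases hw : w = p
    · exact ⟨none, hw.symm⟩
    · obtain ⟨a, j, rfl⟩ := hp w hw
      exact ⟨some (a, j), rfl⟩
  have hcard : Nat.card (Option (A × ZMod k)) ≤ Nat.card (Point G) := by
    simp only [Finite.card_option, Nat.card_prod, Nat.card_zmod, Nat.card_eq_fintype_card (α := A),
      Nat.card_eq_fintype_card (α := Bool), Fintype.card_bool, hA, hG]
    exact le_of_eq (by ring)
  intro a a' j j' haj
  exact Prod.ext_iff.1 <| Option.some_injective _ <|
    (hsurj.bijective_of_nat_card_le hcard).injective
      (a₁ := some (a, j)) (a₂ := some (a', j')) haj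

lemma cover {φ : ZMod k →+ G} (hf : IsStarter f (φ 1)) {u v : Point G} (huv : u ≠ v) :
    (∃ x, CycleAdj (fun a j => Point.shift x (f a j)) u v) ∨ CycleAdj (cosetCycle φ) u v := by
  have hinfinity (b : Bool) (z : G) :
      ∃ x, CycleAdj (fun a j => Point.shift x (f a j)) none (some (b, z)) := by
    obtain ⟨y, h⟩ := hf.infinity b
    exact ⟨z - y, by simpa [Point.shift] using h.comp (Point.shift (z - y))⟩
  have hmixed (y z : G) :
      ∃ x, CycleAdj (fun a j => Point.shift x (f a j)) (some (false, y)) (some (true, z)) :=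
    (hf.mixed (z - y)).exists_cycleAdj_shift
  match u, v with
  | none, none => exact absurd rfl huv
  | none, some (b, z) => exact .inl (hinfinity b z)
  | some (b, y), none => exact .inl ((hinfinity b y).imp fun _ => CycleAdj.symm)
  | some (false, y), some (true, z) => exact .inl (hmixed y z)
  | some (true, y), some (false, z) => exact .inl ((hmixed z y).imp fun _ => CycleAdj.symm)
  | some (true, y), some (true, z) =>
    have hne : z - y ≠ 0 := sub_ne_zero.2 fun h => huv (by rw [h])
    exact .inl (hf.upper _ hne).exists_cycleAdj_shift
  | some (false, y), some (false, z) =>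
    have hne : z - y ≠ 0 := sub_ne_zero.2 fun h => huv (by rw [h])
    by_cases hpos : z - y = φ 1
    · obtain rfl : z = y + φ 1 := by rw [← hpos, add_sub_cancel]
      exact .inr (cycleAdj_cosetCycle φ y)
    by_cases hneg : z - y = -φ 1
    · obtain rfl : y = z + φ 1 := by rw [← neg_eq_iff_eq_neg.2 hneg, neg_sub, add_sub_cancel]
      exact .inr (cycleAdj_cosetCycle φ z).symm
    exact .inl (hf.lower _ hne hpos hneg).exists_cycleAdj_shift

theorem isARCS [Fintype A] [Finite G] (hk : 3 ≤ k) (hA : Fintype.card A = 2 * t)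
    (hG : Nat.card G = k * t) {φ : ZMod k →+ G} (hφ : Function.Injective φ)
    (hf : IsStarter f (φ 1)) : IsARCS k (2 * k * t + 1) := by
  have : NeZero k := ⟨by lia⟩
  have := Fintype.ofFinite G
  have := Fintype.ofFinite (G ⧸ φ.range)
  have hG' : Fintype.card G = k * t := by rw [← Nat.card_eq_fintype_card, hG]
  refine isARCS_of_forall_cycleAdj hk ?_ hG' hA
    (by rw [← Nat.card_eq_fintype_card, card_quotient_range hφ hG])
    (F := fun x a j => Point.shift x (f a j)) (H := cosetCycle φ)
    (fun x _ _ _ _ h => hf.injective2 hA hG (Point.shift_injective x h))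
    (cosetCycle_injective2 hφ) fun _ _ => hf.cover
  rw [Fintype.card_option, Fintype.card_prod, Fintype.card_bool, hG', mul_assoc]

end IsStarter

lemma exists_injective_zmodHom_map_one {n : ℕ} [NeZero t] (hn : n = k * t) :
    ∃ φ : ZMod k →+ ZMod n, Function.Injective φ ∧ φ 1 = t := by
  subst hn
  let mulT : ℤ →+ ZMod (k * t) :=
    (AddMonoidHom.mulRight (t : ZMod (k * t))).comp (Int.castAddHom (ZMod (k * t)))
  have hmulT (x : ℤ) : mulT x = ((x * t : ℤ) : ZMod (k * t)) := by
    simp [mulT]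
  have hk : mulT k = 0 := by
    rw [hmulT]
    exact_mod_cast ZMod.natCast_self (k * t)
  refine ⟨ZMod.lift k ⟨mulT, hk⟩, (ZMod.lift_injective _).2 fun x hx => ?_, ?_⟩
  · rw [hmulT, ZMod.intCast_zmod_eq_zero_iff_dvd, Nat.cast_mul] at hx
    exact (ZMod.intCast_zmod_eq_zero_iff_dvd x k).2 <|
      (mul_dvd_mul_iff_right (by exact_mod_cast NeZero.ne t)).1 hx
  · simpa [hmulT] using ZMod.lift_coe k ⟨mulT, hk⟩ 1

end Starter

section Lists

variable {A α : Type*}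

/-- The elements `p` and `q` occur next to each other, in either order, in the list `L`. -/
def Linked (L : List α) (p q : α) : Prop :=
  (p, q) ∈ L.consecutivePairs ∨ (q, p) ∈ L.consecutivePairs

lemma not_linked_nil (p q : α) : ¬ Linked [] p q := by
  simp [Linked]

lemma linked_cons {a : α} {L : List α} {p q : α} :
    Linked (a :: L) p q ↔
      Linked L p q ∨ (p = a ∧ q ∈ L.head?) ∨ (q = a ∧ p ∈ L.head?) := by
  cases L with
  | nil => simp [Linked, List.consecutivePairs]
  | cons b L =>
    simp only [Linked, List.consecutivePairs, List.tail_cons, List.zip_cons_cons, List.mem_cons,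
      Prod.mk.injEq, List.head?_cons, Option.mem_some_iff, eq_comm (a := b)]
    tauto

/-- The elements `p` and `q` are neighbours on one of the lists `L a`, read cyclically. -/
def CyclicallyLinked (L : A → List α) (p q : α) : Prop :=
  ∃ a, Linked (L a ++ (L a).take 1) p q

/-- The closed walks that run cyclically through the lists `L a`. -/
def listCycle {k : ℕ} [NeZero k] (L : A → List α) (hL : ∀ a, (L a).length = k) (a : A)
    (j : ZMod k) : α :=
  (L a)[j.val]'(hL a ▸ j.val_lt)

variable {k : ℕ} [NeZero k] {L : A → List α} (hL : ∀ a, (L a).length = k)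

lemma exists_listCycle_eq {a : A} {p : α} (h : p ∈ L a) : ∃ j, listCycle L hL a j = p := by
  obtain ⟨s, hs, rfl⟩ := List.getElem_of_mem h
  exact ⟨s, by simp only [listCycle, ZMod.val_natCast_of_lt (hL a ▸ hs)]⟩

lemma getElem_append_take_one (a : A) (s : ℕ) (hs : s < (L a ++ (L a).take 1).length) :
    (L a ++ (L a).take 1)[s] = listCycle L hL a s := by
  have hpos : 0 < k := NeZero.pos k
  obtain hlt | rfl : s < k ∨ s = k := by
    rw [List.length_append, List.length_take, hL] at hs
    lia
  · simp only [listCycle, ZMod.val_natCast_of_lt hlt, List.getElem_append_left (hL a ▸ hlt)]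
  · simp [listCycle, hL]

lemma CyclicallyLinked.cycleAdj_listCycle {p q : α} (h : CyclicallyLinked L p q) :
    CycleAdj (listCycle L hL) p q := by
  have hpair {a : A} {p q : α} (h : (p, q) ∈ (L a ++ (L a).take 1).consecutivePairs) :
      CycleAdj (listCycle L hL) p q := by
    obtain ⟨s, hs, hpq⟩ := List.getElem_of_mem h
    simp only [List.getElem_zip, List.getElem_tail, Prod.mk.injEq,
      getElem_append_take_one hL] at hpq
    obtain ⟨rfl, rfl⟩ := hpq
    exact_mod_cast cycleAdj_apply_add_one (listCycle L hL) a s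
  obtain ⟨a, h | h⟩ := h
  exacts [hpair h, (hpair h).symm]

end Lists

section Differences

variable {A G : Type*} [AddCommGroup G] {b c : Bool} {d : G}

lemma not_hasDifference_linked_nil : ¬ HasDifference (Linked []) b c d :=
  fun ⟨_, h⟩ => not_linked_nil _ _ h

lemma hasDifference_linked_none_cons {L : List (Point G)} :
    HasDifference (Linked (none :: L)) b c d ↔ HasDifference (Linked L) b c d := by
  simp [HasDifference, linked_cons]

lemma hasDifference_linked_cons {L : List (Point G)} {a : Bool} {x : G} :
    HasDifference (Linked (some (a, x) :: L)) b c d ↔ HasDifference (Linked L) b c d ∨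
      (b = a ∧ some (c, x + d) ∈ L.head?) ∨ (c = a ∧ some (b, x - d) ∈ L.head?) := by
  simp only [HasDifference, linked_cons, exists_or, Option.some.injEq, Prod.mk.injEq, and_assoc,
    exists_and_left, exists_eq_left, ← eq_sub_iff_add_eq]

lemma hasDifference_cyclicallyLinked {L : A → List (Point G)} :
    HasDifference (CyclicallyLinked L) b c d ↔
      ∃ a, HasDifference (Linked (L a ++ (L a).take 1)) b c d :=
  exists_comm

end Differences

section Reduction

/-- Reduction of the coordinates modulo `n`. -/
def Point.reduce (n : ℕ) : Point ℤ → Point (ZMod n) :=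
  Option.map (Prod.map id Int.cast)

/-- The closed walks that run cyclically through the lists `L a`, with coordinates modulo `n`. -/
def modCycle {A : Type*} {k : ℕ} [NeZero k] (n : ℕ) (L : A → List (Point ℤ))
    (hL : ∀ a, (L a).length = k) (a : A) (j : ZMod k) : Point (ZMod n) :=
  (listCycle L hL a j).reduce n

variable {A : Type*} {k n : ℕ} [NeZero k] {L : A → List (Point ℤ)} (hL : ∀ a, (L a).length = k)

lemma exists_modCycle_eq {a : A} {p : Point ℤ} (h : p ∈ L a) :
    ∃ a j, modCycle n L hL a j = p.reduce n := by
  obtain ⟨j, hj⟩ := exists_listCycle_eq hL h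
  exact ⟨a, j, congrArg _ hj⟩

lemma CyclicallyLinked.cycleAdj_modCycle {p q : Point ℤ} (h : CyclicallyLinked L p q) :
    CycleAdj (modCycle n L hL) (p.reduce n) (q.reduce n) :=
  (h.cycleAdj_listCycle hL).comp (Point.reduce n)

lemma HasDifference.modCycle {b c : Bool} {x : ℤ} (h : HasDifference (CyclicallyLinked L) b c x) :
    HasDifference (CycleAdj (modCycle n L hL)) b c x := by
  obtain ⟨y, h⟩ := h
  exact ⟨y, by simpa [Point.reduce] using h.cycleAdj_modCycle hL⟩

lemma hasDifference_modCycle_of_or {b c : Bool} {x : ℤ}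
    (h : HasDifference (CyclicallyLinked L) b c x ∨
      HasDifference (CyclicallyLinked L) b c (x - n)) :
    HasDifference (CycleAdj (modCycle n L hL)) b c x := by
  obtain h | h := h
  · exact h.modCycle hL
  · simpa only [Int.cast_sub, Int.cast_natCast, ZMod.natCast_self, sub_zero] using
      h.modCycle (n := n) hL

lemma exists_intCast_eq_of_zmod [NeZero n] (d : ZMod n) : ∃ x : ℤ, x = d ∧ 0 ≤ x ∧ x < n :=
  ⟨d.val, by simp, by positivity, by exact_mod_cast d.val_lt⟩

end Reduction

section Zigzag

/-- The list `(b, u), (c, v), (b, u + e), (c, v - e), (b, u + 2 e), …` with `2 m` entries. For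
`e = ±1` the differences of consecutive entries run through an interval. -/
def zigzag (b c : Bool) (e : ℤ) : ℤ → ℤ → ℕ → List (Point ℤ)
  | _, _, 0 => []
  | u, v, m + 1 => some (b, u) :: some (c, v) :: zigzag b c e (u + e) (v - e) m

variable {b c : Bool} {e u v : ℤ} {m : ℕ} {M : List (Point ℤ)}

lemma length_zigzag : (zigzag b c e u v m).length = 2 * m := by
  induction m generalizing u v with
  | zero => rfl
  | succ m ih => simp only [zigzag, List.length_cons, ih]; ring

lemma head?_zigzag_append (hm : m ≠ 0) : (zigzag b c e u v m ++ M).head? = some (some (b, u)) := by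
  cases m with
  | zero => contradiction
  | succ m => rfl

lemma mem_zigzag (he : e * e = 1) {a : Bool} {x : ℤ} :
    some (a, x) ∈ zigzag b c e u v m ↔
      (a = b ∧ 0 ≤ e * (x - u) ∧ e * (x - u) < m) ∨
      (a = c ∧ 0 ≤ e * (v - x) ∧ e * (v - x) < m) := by
  induction m generalizing u v with
  | zero => simp [zigzag]
  | succ m ih =>
    simp only [zigzag, List.mem_cons, ih, Option.some.injEq, Prod.mk.injEq]
    obtain rfl | rfl := mul_self_eq_one_iff.1 he <;> grind

lemma hasDifference_zigzag_append (he : e * e = 1) (hm : m ≠ 0) {b' c' : Bool} {d : ℤ} :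
    HasDifference (Linked (zigzag b c e u v m ++ M)) b' c' d ↔
      HasDifference (Linked M) b' c' d ∨
      (b' = b ∧ c' = c ∧ 0 ≤ e * (v - u - d) ∧ e * (v - u - d) < 2 * m - 1) ∨
      (b' = c ∧ c' = b ∧ 0 ≤ e * (v - u + d) ∧ e * (v - u + d) < 2 * m - 1) ∨
      (b' = c ∧ some (c', v - e * (m - 1) + d) ∈ M.head?) ∨
      (c' = c ∧ some (b', v - e * (m - 1) - d) ∈ M.head?) := by
  induction m generalizing u v with
  | zero => contradiction
  | succ m ih =>
    rw [zigzag, List.cons_append, List.cons_append, hasDifference_linked_cons,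
      hasDifference_linked_cons, List.head?_cons]
    have hunit := mul_self_eq_one_iff.1 he
    obtain rfl | hm := eq_or_ne m 0
    · obtain rfl | rfl := hunit <;> grind [zigzag]
    · rw [ih hm, head?_zigzag_append hm]
      simp only [Option.mem_def, Option.some.injEq, Prod.mk.injEq]
      obtain rfl | rfl := hunit <;> grind (splits := 20)

end Zigzag

section BaseCycle

/-- The integer `x` on the lower level. -/
abbrev lo (x : ℤ) : Point ℤ := some (false, x)

/-- The integer `x` on the upper level. -/
abbrev hi (x : ℤ) : Point ℤ := some (true, x)

/-- Integer representatives of the six base cycles of length `4 m + 7`. Modulo `12 m + 21` they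
pass through every point except `0` on the lower level. -/
def baseCycle (m : ℕ) : Fin 6 → List (Point ℤ) := ![
  [lo (2 * m + 5), none] ++
    zigzag true true 1 (2 * m + 2) (2 * m + 1) m ++
    [hi (3 * m + 2), hi m] ++
    zigzag false false (-1) (3 * m + 5) (7 * m + 14) m ++
    [lo (2 * m + 4), lo (4 * m + 8), hi (6 * m + 7)],
  [hi (10 * m + 16), hi (12 * m + 20), hi (10 * m + 15), lo (8 * m + 14), hi (8 * m + 11),
      hi (4 * m + 4)] ++
    zigzag false false 1 1 (4 * m + 7) m ++
    [hi (9 * m + 12)] ++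
    zigzag true false 1 (7 * m + 11) (5 * m + 9) m,
  [hi (4 * m + 3)] ++
    zigzag false false (-1) (12 * m + 20) (10 * m + 18) m ++
    [lo (m + 3), lo (9 * m + 16), lo (3 * m + 6), lo (7 * m + 13), hi (5 * m + 5),
      lo (3 * m + 7)] ++
    zigzag true false 1 (3 * m + 3) (7 * m + 12) m,
  [hi (7 * m + 9), hi (11 * m + 19), lo (m + 2), lo (11 * m + 18), lo (5 * m + 10),
      hi (11 * m + 18), lo (5 * m + 11)] ++
    zigzag false true 1 (5 * m + 13) (11 * m + 16) m ++
    zigzag true true 1 (6 * m + 9) (12 * m + 19) m,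
  [lo (11 * m + 20), hi (7 * m + 10), lo (9 * m + 17), hi (11 * m + 17), lo (11 * m + 19),
      lo (m + 1)] ++
    zigzag true true (-1) (9 * m + 11) (5 * m + 7) m ++
    [lo (8 * m + 15)] ++
    zigzag false true 1 (8 * m + 16) (10 * m + 13) m,
  [hi (5 * m + 6), hi (m + 1), hi (9 * m + 13), lo (5 * m + 12)] ++
    zigzag true false (-1) (m - 1) (m + 4) m ++
    [lo (4 * m + 9), hi (10 * m + 14), hi (6 * m + 8)] ++
    zigzag true false 1 (4 * m + 5) (10 * m + 17) m]

variable {m : ℕ} {x : ℤ}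

lemma length_baseCycle (m : ℕ) (i : Fin 6) : (baseCycle m i).length = 4 * m + 7 := by
  fin_cases i <;> simp +arith [baseCycle, length_zigzag]

lemma exists_mem_baseCycle {b : Bool} (hnonneg : 0 ≤ x) (hlt : x < 12 * m + 21)
    (hne : b = false → x ≠ 0) : ∃ i, some (b, x) ∈ baseCycle m i := by
  cases b <;>
  simp only [baseCycle, Fin.exists_fin_succ, IsEmpty.exists_iff, Matrix.cons_val_zero,
    Matrix.cons_val_succ, List.cons_append, List.nil_append, List.append_assoc, List.mem_cons,
    List.mem_append, List.not_mem_nil, mem_zigzag (one_mul 1), mem_zigzag (neg_one_mul (-1)),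
    Option.some.injEq, Prod.mk.injEq, reduceCtorEq, Bool.true_eq_false, true_and,
    false_and, false_or, or_false, forall_const] at hne ⊢ <;>
  omega

lemma none_mem_baseCycle (m : ℕ) : none ∈ baseCycle m 0 := by
  simp [baseCycle]

lemma exists_cyclicallyLinked_none_baseCycle (hm : m ≠ 0) (b : Bool) :
    ∃ y, CyclicallyLinked (baseCycle m) none (some (b, y)) := by
  cases b
  · exact ⟨2 * m + 5, 0, by simp [baseCycle, linked_cons]⟩
  · exact ⟨2 * m + 2, 0, by simp [baseCycle, linked_cons, head?_zigzag_append hm]⟩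

lemma hasDifference_baseCycle {b c : Bool} (hm : m ≠ 0) (hnonneg : 0 ≤ x) (hlt : x < 12 * m + 21)
    (hzero : b = c → x ≠ 0) (hthree : b = false → c = false → x ≠ 3 ∧ x ≠ 12 * m + 18) :
    HasDifference (CyclicallyLinked (baseCycle m)) b c x ∨
      HasDifference (CyclicallyLinked (baseCycle m)) b c (x - (12 * m + 21)) := by
  cases b <;> cases c <;>
  simp only [hasDifference_cyclicallyLinked, baseCycle, Fin.exists_fin_succ, IsEmpty.exists_iff,
    Matrix.cons_val_zero, Matrix.cons_val_succ, List.cons_append, List.nil_append,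
    List.append_assoc, List.take_succ_cons, List.take_zero, hasDifference_linked_cons,
    hasDifference_linked_none_cons, not_hasDifference_linked_nil,
    hasDifference_zigzag_append (one_mul 1) hm, hasDifference_zigzag_append (neg_one_mul (-1)) hm,
    head?_zigzag_append hm, List.head?_cons, List.head?_nil, Option.mem_def, Option.some.injEq,
    Prod.mk.injEq, reduceCtorEq, Bool.true_eq_false, true_and, false_and, and_false,
    false_or, or_false, forall_const] at hzero hthree ⊢ <;>
  omega

lemma isStarter_modCycle_baseCycle (hm : m ≠ 0) :
    IsStarter (modCycle (12 * m + 21) (baseCycle m) (length_baseCycle m)) 3 where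
  covers := by
    refine ⟨some (false, 0), fun w hw => ?_⟩
    rcases w with _ | ⟨b, d⟩
    · exact exists_modCycle_eq _ (none_mem_baseCycle m)
    obtain ⟨x, rfl, hnonneg, hlt⟩ := exists_intCast_eq_of_zmod d
    have hne : b = false → x ≠ 0 := by
      rintro rfl rfl
      exact hw (by rw [Int.cast_zero])
    obtain ⟨i, hi⟩ := exists_mem_baseCycle hnonneg (mod_cast hlt) hne
    exact exists_modCycle_eq _ hi
  infinity b := by
    obtain ⟨y, h⟩ := exists_cyclicallyLinked_none_baseCycle hm b
    exact ⟨y, h.cycleAdj_modCycle _⟩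
  lower d hzero hpos hneg := by
    obtain ⟨x, rfl, hnonneg, hlt⟩ := exists_intCast_eq_of_zmod d
    have hx0 : x ≠ 0 := fun h => hzero (by rw [h, Int.cast_zero])
    have hx3 : x ≠ 3 := fun h => hpos (by rw [h, Int.cast_ofNat])
    have hx18 : x ≠ 12 * m + 18 := by
      rintro rfl
      refine hneg (eq_neg_of_add_eq_zero_left ?_)
      exact_mod_cast ZMod.natCast_self (12 * m + 21)
    exact hasDifference_modCycle_of_or _
      (mod_cast hasDifference_baseCycle hm hnonneg (mod_cast hlt) (fun _ => hx0)
        fun _ _ => ⟨hx3, hx18⟩)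
  upper d hzero := by
    obtain ⟨x, rfl, hnonneg, hlt⟩ := exists_intCast_eq_of_zmod d
    have hx0 : x ≠ 0 := fun h => hzero (by rw [h, Int.cast_zero])
    exact hasDifference_modCycle_of_or _
      (mod_cast hasDifference_baseCycle hm hnonneg (mod_cast hlt) (fun _ => hx0) nofun)
  mixed d := by
    obtain ⟨x, rfl, hnonneg, hlt⟩ := exists_intCast_eq_of_zmod d
    exact hasDifference_modCycle_of_or _
      (mod_cast hasDifference_baseCycle hm hnonneg (mod_cast hlt) nofun nofun)

end BaseCycle

theorem stmt7 (k : ℕ) (h11 : 11 ≤ k) (hk : k % 4 = 3) : IsARCS k (6 * k + 1) := by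
  obtain ⟨m, hm, rfl⟩ : ∃ m, m ≠ 0 ∧ k = 4 * m + 7 := ⟨k / 4 - 1, by lia, by lia⟩
  have hcard : 12 * m + 21 = (4 * m + 7) * 3 := by ring
  obtain ⟨φ, hφ, hφ1⟩ := exists_injective_zmodHom_map_one hcard
  have hstarter : IsStarter (modCycle (12 * m + 21) (baseCycle m) (length_baseCycle m)) (φ 1) := by
    rw [hφ1]
    exact isStarter_modCycle_baseCycle hm
  have horder : 6 * (4 * m + 7) + 1 = 2 * (4 * m + 7) * 3 + 1 := by ring
  rw [horder]
  exact hstarter.isARCS (by lia) (Fintype.card_fin 6) ((Nat.card_zmod _).trans hcard) hφ
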